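/- arXiv:0811.2507 — 8 statements merged into one kernel-verified Lean document; each statement's English description precedes it below -/
import Mathlib

section
/- Let X be a nonempty compact metric space and let (R_n)_{n∈ℕ} be a sequence of equivalence relations on X such that: each R_n is closed as a subset of X × X, the relations are decreasing (x R_{n+1} y implies x R_n y for all n), and the intersection of all R_n is the diagonal (x R_n y for all n implies x = y). Give each quotient X/R_n the quotient topology and let q_n : X/R_{n+1} → X/R_n be the natural projection induced by the inclusion of relations. Then the map sending x ∈ X to the sequence of its equivalence classes ([x]_{R_0}, [x]_{R_1}, …) is a homeomorphism from X onto the inverse limit lim←(X/R_n, q_n) = { (y_n) ∈ ∏_n X/R_n : q_n(y_{n+1}) = y_n for all n }. -/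
/-- Let `X` be a nonempty compact metric space and `R n` a sequence of equivalence
relations on `X` such that each `R n` is closed in `X × X`, the relations are decreasing,
and their intersection is the diagonal.  Give each quotient `X ⧸ R n` the quotient
topology, with bonding maps `q n : X ⧸ R (n+1) → X ⧸ R n` induced by the inclusion of
relations.  Then `x ↦ ([x]_{R 0}, [x]_{R 1}, …)` is a homeomorphism from `X` onto the
inverse limit `lim← (X ⧸ R n, q n)`, i.e. the subspace
`{ y ∈ ∏ n, X ⧸ R n : q n (y (n+1)) = y n }` of the product. -/
theorem stmt_0 {X : Type*} [MetricSpace X] [CompactSpace X] [Nonempty X]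
    (R : ℕ → Setoid X)
    (hclosed : ∀ n, IsClosed {p : X × X | (R n).r p.1 p.2})
    (hdec : ∀ n x y, (R (n + 1)).r x y → (R n).r x y)
    (hdiag : ∀ x y, (∀ n, (R n).r x y) → x = y) :
    ∃ h : X ≃ₜ
      {y : (n : ℕ) → Quotient (R n) //
        ∀ n, Quotient.lift (Quotient.mk (R n))
          (fun a b hab => Quotient.sound (hdec n a b hab)) (y (n + 1)) = y n},
      ∀ (x : X) (n : ℕ), (h x : (n : ℕ) → Quotient (R n)) n = Quotient.mk (R n) x := by
  have hmk : ∀ n (C : Set X), IsClosed C → IsClosed (Quotient.mk (R n) '' C) := by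
    intro n C hC
    have hq : Topology.IsQuotientMap (Quotient.mk (R n)) := isQuotientMap_quot_mk
    rw [← hq.isClosed_preimage]
    have h1 : IsClosed ({p : X × X | (R n).r p.1 p.2} ∩ Prod.fst ⁻¹' C) :=
      (hclosed n).inter (hC.preimage continuous_fst)
    have h2 := (h1.isCompact.image continuous_snd).isClosed
    convert h2 using 1
    ext x
    constructor
    · rintro ⟨c, hc, hcx⟩
      exact ⟨(c, x), ⟨Quotient.exact hcx, hc⟩, rfl⟩
    · rintro ⟨⟨c, x'⟩, ⟨hr, hc⟩, rfl⟩
      exact ⟨c, hc, Quotient.sound hr⟩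
  have hfib : ∀ n (y : Quotient (R n)), IsClosed {x : X | Quotient.mk (R n) x = y} := by
    intro n y
    induction y using Quotient.inductionOn with
    | h a =>
      have h1 := (hclosed n).preimage (f := fun x : X => (x, a)) (by fun_prop)
      convert h1 using 1
      ext x
      exact Quotient.eq
  let f : X → {y : (n : ℕ) → Quotient (R n) //
        ∀ n, Quotient.lift (Quotient.mk (R n))
          (fun a b hab => Quotient.sound (hdec n a b hab)) (y (n + 1)) = y n} :=
    fun x => ⟨fun n => Quotient.mk (R n) x, fun n => rfl⟩
  have key : ∀ C : Set X, IsClosed C → ∀ y : {y : (n : ℕ) → Quotient (R n) //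
        ∀ n, Quotient.lift (Quotient.mk (R n))
          (fun a b hab => Quotient.sound (hdec n a b hab)) (y (n + 1)) = y n},
      (∀ n, y.1 n ∈ Quotient.mk (R n) '' C) → ∃ x ∈ C, f x = y := by
    intro C hC y hy
    have hne : (⋂ n, (C ∩ {x : X | Quotient.mk (R n) x = y.1 n})).Nonempty := by
      apply IsCompact.nonempty_iInter_of_sequence_nonempty_isCompact_isClosed
      · rintro n x ⟨hx, hxy⟩
        refine ⟨hx, ?_⟩
        have h1 := y.2 n
        have hxy' : Quotient.mk (R (n + 1)) x = y.1 (n + 1) := hxy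
        rw [← hxy'] at h1
        exact h1
      · intro n
        obtain ⟨c, hc, h⟩ := hy n
        exact ⟨c, hc, h⟩
      · exact (hC.inter (hfib 0 _)).isCompact
      · exact fun n => hC.inter (hfib n _)
    obtain ⟨x, hx⟩ := hne
    rw [Set.mem_iInter] at hx
    exact ⟨x, (hx 0).1, Subtype.ext (funext fun n => (hx n).2)⟩
  have hcont : Continuous f :=
    Continuous.subtype_mk (continuous_pi fun n => continuous_quot_mk) _
  have hinj : Function.Injective f := by
    intro x y hxy
    exact hdiag x y fun n => Quotient.exact (congrFun (congrArg Subtype.val hxy) n)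
  have hsurj : Function.Surjective f := by
    intro y
    obtain ⟨x, -, hx⟩ := key Set.univ isClosed_univ y (fun n => by
      obtain ⟨a, ha⟩ := Quotient.exists_rep (y.1 n)
      exact ⟨a, trivial, ha⟩)
    exact ⟨x, hx⟩
  have hcl : IsClosedMap f := by
    intro C hC
    have h1 : f '' C = ⋂ n, (fun y => y.1 n) ⁻¹' (Quotient.mk (R n) '' C) := by
      ext y
      rw [Set.mem_iInter]
      constructor
      · rintro ⟨x, hx, rfl⟩ n
        exact ⟨x, hx, rfl⟩
      · exact fun h => key C hC y h
    rw [h1]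
    exact isClosed_iInter fun n =>
      (hmk n C hC).preimage ((continuous_apply n).comp continuous_subtype_val)
  exact ⟨(Equiv.ofBijective f ⟨hinj, hsurj⟩).toHomeomorphOfContinuousClosed hcont hcl,
    fun x n => rfl⟩
end

section
/- Let R be a commutative ring, M an R-module, and f : M → M an R-linear endomorphism. Let A ⊆ B be submodules of M with f(A) ⊆ A and f(B) ⊆ B, and suppose there exists N ∈ ℕ with f^N(B) ⊆ A. Then the natural quotient maps M/A → M/B (at every stage) induce an isomorphism between the direct limit of the system M/A →^{f̄} M/A →^{f̄} ⋯ and the direct limit of the system M/B →^{f̄} M/B →^{f̄} ⋯, where f̄ denotes the endomorphism induced by f on each quotient. -/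
theorem mapQ_pow_mk {R : Type*} [CommRing R] {M : Type*} [AddCommGroup M] [Module R M]
    (f : Module.End R M) (A : Submodule R M) (hA : A ≤ A.comap f) (k : ℕ) (x : M) :
    ((Submodule.mapQ A A f hA) ^ k) (Submodule.Quotient.mk x) =
      Submodule.Quotient.mk ((f ^ k) x) := by
  induction k with
  | zero => simp
  | succ k ih => rw [pow_succ', pow_succ', Module.End.mul_apply, ih]; rfl

theorem of_mk_pow {R : Type*} [CommRing R] {M : Type*} [AddCommGroup M] [Module R M]
    (f : Module.End R M) (A : Submodule R M) (hA : A ≤ A.comap f) (i j : ℕ) (hij : i ≤ j) (x : M) :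
    Module.DirectLimit.of R ℕ (fun _ : ℕ => M ⧸ A)
      (fun i j _ => (Submodule.mapQ A A f hA) ^ (j - i)) j
        (Submodule.Quotient.mk ((f ^ (j - i)) x)) =
    Module.DirectLimit.of R ℕ (fun _ : ℕ => M ⧸ A)
      (fun i j _ => (Submodule.mapQ A A f hA) ^ (j - i)) i (Submodule.Quotient.mk x) := by
  rw [← mapQ_pow_mk f A hA]
  exact Module.DirectLimit.of_f (R := R) (ι := ℕ) (G := fun _ : ℕ => M ⧸ A)
    (f := fun i j _ => (Submodule.mapQ A A f hA) ^ (j - i)) (hij := hij)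

/-- The map out of the limit of quotients by `A` induced by stage-wise maps killing `A`. -/
theorem exists_lim_map {R : Type*} [CommRing R] {M : Type*} [AddCommGroup M] [Module R M]
    (f : Module.End R M) (A B : Submodule R M)
    (hA : A ≤ A.comap f) (hB : B ≤ B.comap f) (N : ℕ) (hN : A.map (f ^ N) ≤ B) :
    ∃ e :
      Module.DirectLimit (R := R) (ι := ℕ) (fun _ : ℕ => M ⧸ A)
          (fun i j _ => (Submodule.mapQ A A f hA) ^ (j - i)) →ₗ[R]
        Module.DirectLimit (R := R) (ι := ℕ) (fun _ : ℕ => M ⧸ B)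
          (fun i j _ => (Submodule.mapQ B B f hB) ^ (j - i)),
      ∀ (i : ℕ) (x : M),
        e (Module.DirectLimit.of R ℕ (fun _ : ℕ => M ⧸ A)
            (fun i j _ => (Submodule.mapQ A A f hA) ^ (j - i)) i (Submodule.Quotient.mk x)) =
          Module.DirectLimit.of R ℕ (fun _ : ℕ => M ⧸ B)
            (fun i j _ => (Submodule.mapQ B B f hB) ^ (j - i)) i (Submodule.Quotient.mk x) := by
  refine ⟨Module.DirectLimit.lift R ℕ _ _
    (fun i => A.liftQ ((Module.DirectLimit.of R ℕ (fun _ : ℕ => M ⧸ B)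
      (fun i j _ => (Submodule.mapQ B B f hB) ^ (j - i)) i).comp B.mkQ) ?_) ?_, ?_⟩
  · intro a ha
    have h := of_mk_pow f B hB i (i + N) (Nat.le_add_right _ _) a
    have h0 : (Submodule.Quotient.mk ((f ^ (i + N - i)) a) : M ⧸ B) = 0 := by
      rw [Submodule.Quotient.mk_eq_zero, Nat.add_sub_cancel_left]
      exact hN (Submodule.mem_map_of_mem ha)
    rw [h0, map_zero] at h
    exact h.symm
  · intro i j hij x
    obtain ⟨x, rfl⟩ := Submodule.Quotient.mk_surjective _ x
    rw [mapQ_pow_mk]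
    exact of_mk_pow f B hB i j hij x
  · intro i x
    rw [Module.DirectLimit.lift_of]
    rfl

/-- Let `f : M → M` be an `R`-linear endomorphism, `A ⊆ B` submodules of `M` with
`f(A) ⊆ A`, `f(B) ⊆ B`, and `f^N(B) ⊆ A` for some `N`.  Then the stage-wise quotient maps
`M⧸A → M⧸B` induce an isomorphism between the direct limit of `M⧸A →^f̄ M⧸A →^f̄ ⋯` and the
direct limit of `M⧸B →^f̄ M⧸B →^f̄ ⋯`, where `f̄` is the endomorphism induced by `f` on each
quotient and the bonding map from stage `i` to stage `j` is `f̄^(j-i)`. -/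
theorem stmt_4 {R : Type*} [CommRing R] {M : Type*} [AddCommGroup M] [Module R M]
    (f : Module.End R M) (A B : Submodule R M) (hAB : A ≤ B)
    (hA : A ≤ A.comap f) (hB : B ≤ B.comap f) (N : ℕ)
    (hN : B.map (f ^ N) ≤ A) :
    ∃ e :
      Module.DirectLimit (R := R) (ι := ℕ) (fun _ : ℕ => M ⧸ A)
          (fun i j _ => (Submodule.mapQ A A f hA) ^ (j - i)) ≃ₗ[R]
        Module.DirectLimit (R := R) (ι := ℕ) (fun _ : ℕ => M ⧸ B)
          (fun i j _ => (Submodule.mapQ B B f hB) ^ (j - i)),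
      ∀ (i : ℕ) (x : M),
        e (Module.DirectLimit.of R ℕ (fun _ : ℕ => M ⧸ A)
            (fun i j _ => (Submodule.mapQ A A f hA) ^ (j - i)) i (Submodule.Quotient.mk x)) =
          Module.DirectLimit.of R ℕ (fun _ : ℕ => M ⧸ B)
            (fun i j _ => (Submodule.mapQ B B f hB) ^ (j - i)) i (Submodule.Quotient.mk x) := by
  obtain ⟨e, he⟩ := exists_lim_map f A B hA hB 0 (by simpa [Module.End.one_eq_id] using hAB)
  obtain ⟨g, hg⟩ := exists_lim_map f B A hB hA N hN
  refine ⟨LinearEquiv.ofLinear e g ?_ ?_, fun i x => he i x⟩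
  · refine Module.DirectLimit.hom_ext fun i => LinearMap.ext fun x => ?_
    obtain ⟨x, rfl⟩ := Submodule.Quotient.mk_surjective _ x
    simp only [LinearMap.comp_apply, LinearMap.id_apply]
    rw [hg, he]
  · refine Module.DirectLimit.hom_ext fun i => LinearMap.ext fun x => ?_
    obtain ⟨x, rfl⟩ := Submodule.Quotient.mk_surjective _ x
    simp only [LinearMap.comp_apply, LinearMap.id_apply]
    rw [he, hg]
end

section
/- Let M be the integer matrix [[0, 2], [1, 1]], acting ℤ-linearly on ℤ² by v ↦ M·v. Then the direct limit of the ℕ-indexed system ℤ² →^M ℤ² →^M ℤ² →^M ⋯ (bonding map from stage i to stage j equal to M^{j−i}) is isomorphic, as an abelian group, to ℤ[1/2] ⊕ ℤ, where ℤ[1/2] denotes the localization of ℤ away from 2 (the group of dyadic rationals). -/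
/-- The integer sequence `(1 - (-2)^i) / 3`. -/
def pdC : ℕ → ℤ
  | 0 => 0
  | (n + 1) => 1 - 2 * pdC n

/-- The inverse of `2` in `ℤ[1/2]`. -/
noncomputable def pdU : Localization.Away (2 : ℤ) :=
  IsLocalization.Away.invSelf (2 : ℤ)

theorem pdU_mul : (2 : Localization.Away (2 : ℤ)) * pdU = 1 := by
  have h := IsLocalization.Away.mul_invSelf (S := Localization.Away (2 : ℤ)) (2 : ℤ)
  simpa [pdU] using h

/-- The map from stage `i` to `ℤ[1/2] × ℤ`. -/
noncomputable def pdG (i : ℕ) : (Fin 2 → ℤ) →ₗ[ℤ] Localization.Away (2 : ℤ) × ℤ :=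
  AddMonoidHom.toIntLinearMap
    { toFun := fun v =>
        ((((v 0 - v 1) * pdC i + v 1 : ℤ) : Localization.Away (2 : ℤ)) * pdU ^ i,
          (-1) ^ i * (v 0 - v 1))
      map_zero' := by simp
      map_add' := by
        intro v w
        ext
        · simp only [Pi.add_apply, Prod.mk_add_mk]
          push_cast
          ring
        · simp only [Pi.add_apply, Prod.mk_add_mk]
          ring }

theorem pdG_apply (i : ℕ) (v : Fin 2 → ℤ) : pdG i v =
    ((((v 0 - v 1) * pdC i + v 1 : ℤ) : Localization.Away (2 : ℤ)) * pdU ^ i,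
          (-1) ^ i * (v 0 - v 1)) := rfl

theorem pdG_step (i : ℕ) (v : Fin 2 → ℤ) :
    pdG (i + 1) (Matrix.toLin' (!![0, 2; 1, 1] : Matrix (Fin 2) (Fin 2) ℤ) v) = pdG i v := by
  have h0 : Matrix.toLin' (!![0, 2; 1, 1] : Matrix (Fin 2) (Fin 2) ℤ) v 0 = 2 * v 1 := by
    simp [Matrix.mulVec, dotProduct, Fin.sum_univ_two]
  have h1 : Matrix.toLin' (!![0, 2; 1, 1] : Matrix (Fin 2) (Fin 2) ℤ) v 1 = v 0 + v 1 := by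
    simp [Matrix.mulVec, dotProduct, Fin.sum_univ_two]
  rw [pdG_apply, pdG_apply, h0, h1]
  ext
  · simp only [pdC]
    push_cast
    linear_combination (((v 0 : Localization.Away (2 : ℤ)) - v 1) * pdC i + v 1) * pdU ^ i * pdU_mul
  · simp only
    ring

theorem pdG_pow (k i : ℕ) (v : Fin 2 → ℤ) :
    pdG (i + k) (((Matrix.toLin' (!![0, 2; 1, 1] : Matrix (Fin 2) (Fin 2) ℤ)) ^ k) v)
      = pdG i v := by
  induction k with
  | zero => simp
  | succ k ih =>
    rw [pow_succ', Module.End.mul_apply, ← add_assoc, pdG_step, ih]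

theorem pdG_injective (i : ℕ) : Function.Injective (pdG i) := by
  rw [injective_iff_map_eq_zero]
  intro v hv
  rw [pdG_apply, Prod.mk_eq_zero] at hv
  obtain ⟨h1, h2⟩ := hv
  have h3 : v 0 - v 1 = 0 := by
    rcases mul_eq_zero.1 h2 with h | h
    · exact absurd h (pow_ne_zero _ (by norm_num))
    · exact h
  rw [h3, zero_mul, zero_add] at h1
  have h4 : ((v 1 : ℤ) : Localization.Away (2 : ℤ)) = 0 := by
    calc ((v 1 : ℤ) : Localization.Away (2 : ℤ))
        = (v 1 * pdU ^ i) * 2 ^ i := by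
          rw [mul_assoc, ← mul_pow, mul_comm pdU, pdU_mul, one_pow, mul_one]
      _ = 0 := by rw [h1, zero_mul]
  have h5 : Function.Injective (algebraMap ℤ (Localization.Away (2 : ℤ))) :=
    IsLocalization.injective (M := Submonoid.powers (2 : ℤ)) _
      (powers_le_nonZeroDivisors_of_noZeroDivisors (two_ne_zero (α := ℤ)))
  have h6 : v 1 = 0 := h5 (by simpa using h4)
  ext j
  fin_cases j
  · simp; omega
  · simpa using h6

theorem pdG_surj (z : Localization.Away (2 : ℤ) × ℤ) : ∃ i v, pdG i v = z := by
  obtain ⟨p, q⟩ := z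
  obtain ⟨n, a, h⟩ := IsLocalization.Away.surj (2 : ℤ) p
  have hp : p = (a : Localization.Away (2 : ℤ)) * pdU ^ n := by
    have h' : p * 2 ^ n = (a : Localization.Away (2 : ℤ)) := by simpa using h
    rw [← h', mul_assoc, ← mul_pow, pdU_mul, one_pow, mul_one]
  refine ⟨n, ![(-1) ^ n * q + (a - (-1) ^ n * q * pdC n), a - (-1) ^ n * q * pdC n], ?_⟩
  rw [pdG_apply, hp]
  have hs : ((-1 : ℤ) ^ n) * (-1) ^ n = 1 := by rw [← mul_pow]; simp
  ext
  · simp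
  · simp [← mul_assoc, hs]

/-- The direct limit of the ℕ-indexed system `ℤ² →^M ℤ² →^M ⋯` for
`M = [[0,2],[1,1]]` (bonding map from stage `i` to stage `j` given by `M^(j-i)`)
is isomorphic, as an abelian group, to `ℤ[1/2] ⊕ ℤ`. -/
theorem stmt_7 :
    Nonempty
      (Module.DirectLimit (R := ℤ) (ι := ℕ) (fun _ : ℕ => Fin 2 → ℤ)
          (fun i j _ => (Matrix.toLin' (!![0, 2; 1, 1] : Matrix (Fin 2) (Fin 2) ℤ)) ^ (j - i)) ≃+
        Localization.Away (2 : ℤ) × ℤ) := by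
  have Hg : ∀ (i j : ℕ) (_ : i ≤ j) (x : Fin 2 → ℤ),
      pdG j (((Matrix.toLin' (!![0, 2; 1, 1] : Matrix (Fin 2) (Fin 2) ℤ)) ^ (j - i)) x)
        = pdG i x := by
    intro i j hij x
    obtain ⟨k, rfl⟩ := Nat.exists_eq_add_of_le hij
    rw [Nat.add_sub_cancel_left]
    exact pdG_pow k i x
  refine ⟨(LinearEquiv.ofBijective (Module.DirectLimit.lift ℤ ℕ (fun _ : ℕ => Fin 2 → ℤ)
    (fun i j _ => (Matrix.toLin' (!![0, 2; 1, 1] : Matrix (Fin 2) (Fin 2) ℤ)) ^ (j - i))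
    pdG Hg) ⟨?_, ?_⟩).toAddEquiv⟩
  · exact Module.DirectLimit.lift_injective _ _ pdG_injective
  · intro z
    obtain ⟨i, v, h⟩ := pdG_surj z
    exact ⟨Module.DirectLimit.of ℤ ℕ _ _ i v, by rw [Module.DirectLimit.lift_of, h]⟩
end

section
/- Let M be the integer matrix [[1, 1], [1, 1]], acting ℤ-linearly on ℤ² by v ↦ M·v. Then the direct limit of the ℕ-indexed system ℤ² →^M ℤ² →^M ℤ² →^M ⋯ (bonding map from stage i to stage j equal to M^{j−i}) is isomorphic, as an abelian group, to ℤ[1/2], the localization of ℤ away from 2. -/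
lemma aux_sum (n : ℕ) (v : Fin 2 → ℤ) :
    (((Matrix.toLin' (!![1, 1; 1, 1] : Matrix (Fin 2) (Fin 2) ℤ)) ^ n) v) 0 +
    (((Matrix.toLin' (!![1, 1; 1, 1] : Matrix (Fin 2) (Fin 2) ℤ)) ^ n) v) 1
      = 2 ^ n * (v 0 + v 1) := by
  induction n with
  | zero => simp
  | succ k ih =>
    rw [pow_succ', Module.End.mul_apply, pow_succ', mul_assoc, ← ih]
    generalize ((Matrix.toLin' (!![1, 1; 1, 1] : Matrix (Fin 2) (Fin 2) ℤ)) ^ k) v = w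
    simp [Matrix.toLin'_apply, Matrix.mulVec, dotProduct, Fin.sum_univ_two]
    ring

/-- The map `v ↦ (v 0 + v 1) / 2 ^ i`. -/
noncomputable def auxG (i : ℕ) : (Fin 2 → ℤ) →ₗ[ℤ] Localization.Away (2 : ℤ) where
  toFun v := algebraMap ℤ (Localization.Away (2 : ℤ)) (v 0 + v 1) *
    (IsLocalization.Away.invSelf (2 : ℤ)) ^ i
  map_add' v w := by simp only [Pi.add_apply, map_add]; ring
  map_smul' c v := by
    simp only [Pi.smul_apply, map_add, smul_eq_mul, map_mul, RingHom.id_apply, zsmul_eq_mul,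
      eq_intCast, Int.cast_id]
    ring

lemma auxG_apply (i : ℕ) (v : Fin 2 → ℤ) :
    auxG i v = algebraMap ℤ (Localization.Away (2 : ℤ)) (v 0 + v 1) *
    (IsLocalization.Away.invSelf (2 : ℤ)) ^ i := rfl

lemma aux_inv (n : ℕ) : algebraMap ℤ (Localization.Away (2 : ℤ)) (2 ^ n) *
    (IsLocalization.Away.invSelf (2 : ℤ)) ^ n = 1 := by
  rw [map_pow, ← mul_pow, IsLocalization.Away.mul_invSelf, one_pow]

/-- The direct limit of the ℕ-indexed system `ℤ² →^M ℤ² →^M ⋯` for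
`M = [[1,1],[1,1]]` (bonding map from stage `i` to stage `j` given by `M^(j-i)`)
is isomorphic, as an abelian group, to `ℤ[1/2]`. -/
theorem stmt_8 :
    Nonempty
      (Module.DirectLimit (R := ℤ) (ι := ℕ) (fun _ : ℕ => Fin 2 → ℤ)
          (fun i j _ => (Matrix.toLin' (!![1, 1; 1, 1] : Matrix (Fin 2) (Fin 2) ℤ)) ^ (j - i)) ≃+
        Localization.Away (2 : ℤ)) := by
  have Hg : ∀ (i j : ℕ) (_ : i ≤ j) (x : Fin 2 → ℤ),
      auxG j (((Matrix.toLin' (!![1, 1; 1, 1] : Matrix (Fin 2) (Fin 2) ℤ)) ^ (j - i)) x)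
        = auxG i x := by
    intro i j hij x
    obtain ⟨k, rfl⟩ := Nat.exists_eq_add_of_le hij
    rw [auxG_apply, auxG_apply, aux_sum, Nat.add_sub_cancel_left, map_mul, pow_add]
    linear_combination (algebraMap ℤ (Localization.Away (2 : ℤ)) (x 0 + x 1) *
      (IsLocalization.Away.invSelf (2 : ℤ)) ^ i) * aux_inv k
  let F := Module.DirectLimit.lift ℤ ℕ (fun _ : ℕ => Fin 2 → ℤ)
    (fun i j _ => (Matrix.toLin' (!![1, 1; 1, 1] : Matrix (Fin 2) (Fin 2) ℤ)) ^ (j - i))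
    auxG Hg
  refine ⟨AddEquiv.ofBijective F.toAddMonoidHom ⟨?_, ?_⟩⟩
  · rw [injective_iff_map_eq_zero]
    intro z hz
    obtain ⟨i, v, rfl⟩ := Module.DirectLimit.exists_of z
    have h1 : auxG i v = 0 := by
      rw [← hz]
      exact (Module.DirectLimit.lift_of (G := fun _ : ℕ => Fin 2 → ℤ) auxG Hg v).symm
    rw [auxG_apply] at h1
    have h2 : algebraMap ℤ (Localization.Away (2 : ℤ)) (v 0 + v 1) = 0 := by
      linear_combination (algebraMap ℤ (Localization.Away (2 : ℤ)) (2 ^ i)) * h1 -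
        algebraMap ℤ (Localization.Away (2 : ℤ)) (v 0 + v 1) * aux_inv i
    have hinj : Function.Injective (algebraMap ℤ (Localization.Away (2 : ℤ))) :=
      IsLocalization.injective _ (M := Submonoid.powers (2 : ℤ))
        (powers_le_nonZeroDivisors_of_noZeroDivisors two_ne_zero)
    have h3 : v 0 + v 1 = 0 := hinj (by rw [h2, map_zero])
    rw [← Module.DirectLimit.of_f (hij := Nat.le_succ i)]
    have h4 : ((Matrix.toLin' (!![1, 1; 1, 1] : Matrix (Fin 2) (Fin 2) ℤ)) ^ (i.succ - i)) v
        = 0 := by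
      have : i.succ - i = 1 := by omega
      rw [this, pow_one]
      ext j
      fin_cases j <;>
        simp [Matrix.toLin'_apply, Matrix.mulVec, dotProduct, Fin.sum_univ_two, h3]
    rw [h4, map_zero]
  · intro x
    obtain ⟨n, a, h⟩ := IsLocalization.Away.surj (2 : ℤ) x
    refine ⟨Module.DirectLimit.of ℤ ℕ (fun _ : ℕ => Fin 2 → ℤ) _ n ![a, 0], ?_⟩
    refine (Module.DirectLimit.lift_of (G := fun _ : ℕ => Fin 2 → ℤ) auxG Hg _).trans ?_
    have h5 := aux_inv n
    rw [map_pow] at h5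
    rw [auxG_apply]
    simp only [Matrix.cons_val_zero, Matrix.cons_val_one, add_zero]
    linear_combination x * h5 - (IsLocalization.Away.invSelf (2 : ℤ)) ^ n * h
end

section
/- Let M be the 4 × 4 integer matrix [[1,1,0,0],[1,1,0,0],[0,0,1,1],[0,0,1,1]], acting ℤ-linearly on ℤ⁴ by v ↦ M·v. Then the direct limit of the ℕ-indexed system ℤ⁴ →^M ℤ⁴ →^M ⋯ (bonding map from stage i to stage j equal to M^{j−i}) is isomorphic, as an abelian group, to ℤ[1/2] ⊕ ℤ[1/2]. -/
abbrev chairL : Type := Localization.Away (2 : ℤ)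

abbrev chairT : (Fin 4 → ℤ) →ₗ[ℤ] (Fin 4 → ℤ) :=
  Matrix.toLin' (!![1, 1, 0, 0; 1, 1, 0, 0; 0, 0, 1, 1; 0, 0, 1, 1] : Matrix (Fin 4) (Fin 4) ℤ)

noncomputable abbrev chairH : chairL := IsLocalization.Away.invSelf (2 : ℤ)

theorem chairH_mul : (2 : chairL) * chairH = 1 := by
  have := IsLocalization.Away.mul_invSelf (S := chairL) (2 : ℤ)
  simpa using this

theorem chair_pow (n : ℕ) : (2 : chairL) ^ n * chairH ^ n = 1 := by
  rw [← mul_pow, chairH_mul, one_pow]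

theorem chair_cast_inj (a : ℤ) (h : (a : chairL) = 0) : a = 0 := by
  have hi : Function.Injective (algebraMap ℤ chairL) :=
    IsLocalization.injective chairL (M := Submonoid.powers (2 : ℤ))
      (powers_le_nonZeroDivisors_of_noZeroDivisors (by norm_num))
  apply hi
  simpa using h

theorem chair_surj (z : chairL) : ∃ (n : ℕ) (a : ℤ), z = a * chairH ^ n := by
  obtain ⟨n, a, h⟩ := IsLocalization.Away.surj (2 : ℤ) z
  refine ⟨n, a, ?_⟩
  have h' : z * 2 ^ n = (a : chairL) := by simpa using h
  rw [← h', mul_assoc, chair_pow, mul_one]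

/-- The map from stage `i`. -/
noncomputable def chairG (i : ℕ) : (Fin 4 → ℤ) →ₗ[ℤ] chairL × chairL :=
  AddMonoidHom.toIntLinearMap
    { toFun := fun x => (((x 0 + x 1 : ℤ) : chairL) * chairH ^ i,
        ((x 2 + x 3 : ℤ) : chairL) * chairH ^ i)
      map_zero' := by simp
      map_add' := by
        intro x y
        ext <;> simp <;> ring }

theorem chairG_apply (i : ℕ) (x : Fin 4 → ℤ) : chairG i x =
    (((x 0 + x 1 : ℤ) : chairL) * chairH ^ i, ((x 2 + x 3 : ℤ) : chairL) * chairH ^ i) := rfl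

theorem chairT_apply (x : Fin 4 → ℤ) :
    chairT x = ![x 0 + x 1, x 0 + x 1, x 2 + x 3, x 2 + x 3] := by
  ext k
  fin_cases k <;> simp [chairT, Matrix.toLin'_apply, Matrix.mulVec, dotProduct, Fin.sum_univ_four]

theorem chairG_succ (i : ℕ) (x : Fin 4 → ℤ) : chairG (i + 1) (chairT x) = chairG i x := by
  rw [chairT_apply, chairG_apply, chairG_apply]
  ext
  · simp
    linear_combination ((x 0 : chairL) + x 1) * chairH ^ i * chairH_mul
  · simp
    linear_combination ((x 2 : chairL) + x 3) * chairH ^ i * chairH_mul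

theorem chairG_pow (d i : ℕ) (x : Fin 4 → ℤ) : chairG (i + d) ((chairT ^ d) x) = chairG i x := by
  induction d with
  | zero => simp
  | succ d ih => rw [pow_succ', Module.End.mul_apply, ← add_assoc, chairG_succ, ih]

theorem chairG_ker (i : ℕ) (x : Fin 4 → ℤ) (h : chairG i x = 0) : chairT x = 0 := by
  have key : ∀ a : ℤ, (a : chairL) * chairH ^ i = 0 → a = 0 := by
    intro a ha
    apply chair_cast_inj
    linear_combination 2 ^ i * ha - (a : chairL) * chair_pow i
  rw [chairG_apply, Prod.mk_eq_zero] at h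
  rw [chairT_apply, key _ h.1, key _ h.2]
  ext k
  fin_cases k <;> rfl

/-- The direct limit of the ℕ-indexed system `ℤ⁴ →^M ℤ⁴ →^M ⋯` for
`M = [[1,1,0,0],[1,1,0,0],[0,0,1,1],[0,0,1,1]]` (bonding map from stage `i` to
stage `j` given by `M^(j-i)`) is isomorphic, as an abelian group, to `ℤ[1/2] ⊕ ℤ[1/2]`. -/
theorem stmt_9 :
    Nonempty
      (Module.DirectLimit (R := ℤ) (ι := ℕ) (fun _ : ℕ => Fin 4 → ℤ)
          (fun i j _ =>
            (Matrix.toLin'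
              (!![1, 1, 0, 0; 1, 1, 0, 0; 0, 0, 1, 1; 0, 0, 1, 1] :
                Matrix (Fin 4) (Fin 4) ℤ)) ^ (j - i)) ≃+
        Localization.Away (2 : ℤ) × Localization.Away (2 : ℤ)) := by
  have hG : ∀ (i j : ℕ) (_ : i ≤ j) (x : Fin 4 → ℤ),
      chairG j ((chairT ^ (j - i)) x) = chairG i x := by
    intro i j hij x
    obtain ⟨d, rfl⟩ := Nat.exists_eq_add_of_le hij
    rw [Nat.add_sub_cancel_left]
    exact chairG_pow d i x
  let F := Module.DirectLimit.lift ℤ ℕ (fun _ : ℕ => Fin 4 → ℤ)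
    (fun i j _ => chairT ^ (j - i)) chairG hG
  refine ⟨AddEquiv.ofBijective F.toAddMonoidHom ⟨?_, ?_⟩⟩
  · rw [injective_iff_map_eq_zero]
    intro z hz
    obtain ⟨i, x, rfl⟩ := Module.DirectLimit.exists_of z
    have hz' : chairG i x = 0 := by
      exact (Module.DirectLimit.lift_of (f := fun i j _ => chairT ^ (j - i))
        chairG hG x).symm.trans hz
    have h1 := Module.DirectLimit.of_f (R := ℤ) (ι := ℕ) (G := fun _ : ℕ => Fin 4 → ℤ)
      (f := fun i j _ => chairT ^ (j - i)) (i := i) (j := i + 1) (hij := Nat.le_succ i) (x := x)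
    rw [Nat.add_sub_cancel_left, pow_one, chairG_ker i x hz', map_zero] at h1
    exact h1.symm
  · rintro ⟨u, v⟩
    obtain ⟨n, a, rfl⟩ := chair_surj u
    obtain ⟨m, b, rfl⟩ := chair_surj v
    refine ⟨Module.DirectLimit.of ℤ ℕ _ _ (n + m) ![a * 2 ^ m, 0, b * 2 ^ n, 0], ?_⟩
    refine (Module.DirectLimit.lift_of (f := fun i j _ => chairT ^ (j - i)) chairG hG _).trans ?_
    rw [chairG_apply]
    ext
    · simp
      linear_combination (a : chairL) * chairH ^ n * chair_pow m
    · simp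
      linear_combination (b : chairL) * chairH ^ m * chair_pow n
end

section
/- Let M be the 4 × 4 integer matrix [[2,1,0,1],[1,2,1,0],[0,1,2,1],[1,0,1,2]] (a symmetric circulant), acting ℤ-linearly on ℤ⁴ by v ↦ M·v. Then the direct limit of the ℕ-indexed system ℤ⁴ →^M ℤ⁴ →^M ⋯ (bonding map from stage i to stage j equal to M^{j−i}) is isomorphic, as an abelian group, to ℤ[1/4] ⊕ ℤ[1/2] ⊕ ℤ[1/2] (which, as an abstract abelian group, is ℤ[1/2]³). -/
/-- The chair-tiling matrix. -/
abbrev chairM : Matrix (Fin 4) (Fin 4) ℤ :=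
  !![2, 1, 0, 1; 1, 2, 1, 0; 0, 1, 2, 1; 1, 0, 1, 2]

lemma away_inv (x : ℤ) : ∃ u : Localization.Away x, (x : Localization.Away x) * u = 1 := by
  refine ⟨IsLocalization.Away.invSelf x, ?_⟩
  have := IsLocalization.Away.mul_invSelf (S := Localization.Away x) x
  simpa using this

lemma away_cast_zero (x : ℤ) (hx : x ≠ 0) (a : ℤ) (h : (a : Localization.Away x) = 0) :
    a = 0 := by
  have hinj : Function.Injective (algebraMap ℤ (Localization.Away x)) :=
    IsLocalization.injective _ (powers_le_nonZeroDivisors_of_noZeroDivisors hx)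
  apply hinj
  simpa using h

lemma away_surj (x : ℤ) (u : Localization.Away x) (hu : (x : Localization.Away x) * u = 1)
    (z : Localization.Away x) :
    ∃ n : ℕ, ∀ k : ℕ, ∃ a : ℤ, z = ((a * x ^ k : ℤ) : Localization.Away x) * u ^ (n + k) := by
  obtain ⟨n, a, h⟩ := IsLocalization.Away.surj x z
  refine ⟨n, fun k => ⟨a, ?_⟩⟩
  have h' : z * (x : Localization.Away x) ^ n = (a : Localization.Away x) := by simpa using h
  have hp : ∀ m : ℕ, (x : Localization.Away x) ^ m * u ^ m = 1 := by
    intro m; rw [← mul_pow, hu, one_pow]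
  push_cast
  rw [← h', pow_add]
  linear_combination (-z * (x : Localization.Away x) ^ k * u ^ k) * hp n - z * hp k

lemma chairM_apply (v : Fin 4 → ℤ) : Matrix.toLin' chairM v =
    ![2 * v 0 + v 1 + v 3, v 0 + 2 * v 1 + v 2, v 1 + 2 * v 2 + v 3, v 0 + v 2 + 2 * v 3] := by
  ext i
  fin_cases i <;> simp [chairM, Matrix.mulVec, dotProduct, Fin.sum_univ_four] <;> ring

/-- The map from stage `i` to the limit. -/
def stageMap (u : Localization.Away (4 : ℤ)) (w : Localization.Away (2 : ℤ)) (i : ℕ) :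
    (Fin 4 → ℤ) →ₗ[ℤ]
      Localization.Away (4 : ℤ) × Localization.Away (2 : ℤ) × Localization.Away (2 : ℤ) :=
  (AddMonoidHom.mk' (fun v =>
    (((v 0 + v 1 + v 2 + v 3 : ℤ) : Localization.Away (4 : ℤ)) * u ^ i,
     ((v 0 - v 2 : ℤ) : Localization.Away (2 : ℤ)) * w ^ i,
     ((v 1 - v 3 : ℤ) : Localization.Away (2 : ℤ)) * w ^ i)) (by
      intro a b
      ext <;> simp <;> ring)).toIntLinearMap

lemma stageMap_apply (u : Localization.Away (4 : ℤ)) (w : Localization.Away (2 : ℤ)) (i : ℕ)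
    (v : Fin 4 → ℤ) : stageMap u w i v =
    (((v 0 + v 1 + v 2 + v 3 : ℤ) : Localization.Away (4 : ℤ)) * u ^ i,
     ((v 0 - v 2 : ℤ) : Localization.Away (2 : ℤ)) * w ^ i,
     ((v 1 - v 3 : ℤ) : Localization.Away (2 : ℤ)) * w ^ i) := rfl

lemma stageMap_succ (u : Localization.Away (4 : ℤ)) (w : Localization.Away (2 : ℤ))
    (hu : ((4 : ℤ) : Localization.Away (4 : ℤ)) * u = 1)
    (hw : ((2 : ℤ) : Localization.Away (2 : ℤ)) * w = 1) (i : ℕ) (v : Fin 4 → ℤ) :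
    stageMap u w (i + 1) (Matrix.toLin' chairM v) = stageMap u w i v := by
  rw [chairM_apply, stageMap_apply, stageMap_apply]
  push_cast at hu hw
  refine Prod.ext ?_ (Prod.ext ?_ ?_)
  · simp [pow_succ]
    linear_combination ((v 0 + v 1 + v 2 + v 3 : Localization.Away (4 : ℤ)) * u ^ i) * hu
  · simp [pow_succ]
    linear_combination ((v 0 - v 2 : Localization.Away (2 : ℤ)) * w ^ i) * hw
  · simp [pow_succ]
    linear_combination ((v 1 - v 3 : Localization.Away (2 : ℤ)) * w ^ i) * hw

lemma stageMap_compat (u : Localization.Away (4 : ℤ)) (w : Localization.Away (2 : ℤ))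
    (hu : ((4 : ℤ) : Localization.Away (4 : ℤ)) * u = 1)
    (hw : ((2 : ℤ) : Localization.Away (2 : ℤ)) * w = 1) (i j : ℕ) (hij : i ≤ j)
    (v : Fin 4 → ℤ) :
    stageMap u w j (((Matrix.toLin' chairM) ^ (j - i)) v) = stageMap u w i v := by
  obtain ⟨k, rfl⟩ := Nat.exists_eq_add_of_le hij
  rw [Nat.add_sub_cancel_left]
  clear hij
  induction k with
  | zero => simp
  | succ k ih =>
    rw [pow_succ', Module.End.mul_apply, ← add_assoc, stageMap_succ u w hu hw, ih]

lemma stageMap_ker (u : Localization.Away (4 : ℤ)) (w : Localization.Away (2 : ℤ))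
    (hu : ((4 : ℤ) : Localization.Away (4 : ℤ)) * u = 1)
    (hw : ((2 : ℤ) : Localization.Away (2 : ℤ)) * w = 1) (i : ℕ) (v : Fin 4 → ℤ)
    (h : stageMap u w i v = 0) : Matrix.toLin' chairM v = 0 := by
  have key : ∀ (x : ℤ) (_ : x ≠ 0) (t : Localization.Away x)
      (_ : (x : Localization.Away x) * t = 1) (a : ℤ)
      (_ : (a : Localization.Away x) * t ^ i = 0), a = 0 := by
    intro x hx t ht a ha
    apply away_cast_zero x hx
    have hp : (x : Localization.Away x) ^ i * t ^ i = 1 := by rw [← mul_pow, ht, one_pow]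
    linear_combination (x : Localization.Away x) ^ i * ha - (a : Localization.Away x) * hp
  rw [stageMap_apply] at h
  have h0 := key 4 (by norm_num) u hu _ (congrArg Prod.fst h)
  have h1 := key 2 (by norm_num) w hw _ (congrArg (fun p => p.2.1) h)
  have h2 := key 2 (by norm_num) w hw _ (congrArg (fun p => p.2.2) h)
  rw [chairM_apply]
  ext j
  fin_cases j <;> simp <;> omega

lemma stageMap_surj (u : Localization.Away (4 : ℤ)) (w : Localization.Away (2 : ℤ))
    (hu : ((4 : ℤ) : Localization.Away (4 : ℤ)) * u = 1)
    (hw : ((2 : ℤ) : Localization.Away (2 : ℤ)) * w = 1)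
    (z : Localization.Away (4 : ℤ) × Localization.Away (2 : ℤ) × Localization.Away (2 : ℤ)) :
    ∃ i v, stageMap u w i v = z := by
  obtain ⟨x, y, z⟩ := z
  obtain ⟨n1, h1⟩ := away_surj 4 u hu x
  obtain ⟨n2, h2⟩ := away_surj 2 w hw y
  obtain ⟨n3, h3⟩ := away_surj 2 w hw z
  obtain ⟨a, ha⟩ := h1 (n2 + n3 + 1)
  obtain ⟨b, hb⟩ := h2 (n1 + n3 + 1)
  obtain ⟨c, hc⟩ := h3 (n1 + n2 + 1)
  rw [show n2 + (n1 + n3 + 1) = n1 + (n2 + n3 + 1) by ring] at hb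
  rw [show n3 + (n1 + n2 + 1) = n1 + (n2 + n3 + 1) by ring] at hc
  rw [pow_succ] at ha hb hc
  generalize (4 : ℤ) ^ (n2 + n3) = A at ha
  generalize (2 : ℤ) ^ (n1 + n3) = B at hb
  generalize (2 : ℤ) ^ (n1 + n2) = C at hc
  refine ⟨n1 + (n2 + n3 + 1),
    ![b * (B * 2), 2 * a * A - b * B + c * C, 0, 2 * a * A - b * B - c * C], ?_⟩
  rw [stageMap_apply, ha, hb, hc]
  refine Prod.ext ?_ (Prod.ext ?_ ?_)
  · simp
    left
    ring
  · simp
  · simp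
    left
    ring

/-- The direct limit of the ℕ-indexed system `ℤ⁴ →^M ℤ⁴ →^M ⋯` for the symmetric
circulant `M = [[2,1,0,1],[1,2,1,0],[0,1,2,1],[1,0,1,2]]` (bonding map from stage `i`
to stage `j` given by `M^(j-i)`) is isomorphic, as an abelian group, to
`ℤ[1/4] ⊕ ℤ[1/2] ⊕ ℤ[1/2]`. -/
theorem stmt_10 :
    Nonempty
      (Module.DirectLimit (R := ℤ) (ι := ℕ) (fun _ : ℕ => Fin 4 → ℤ)
          (fun i j _ =>
            (Matrix.toLin'
              (!![2, 1, 0, 1; 1, 2, 1, 0; 0, 1, 2, 1; 1, 0, 1, 2] :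
                Matrix (Fin 4) (Fin 4) ℤ)) ^ (j - i)) ≃+
        Localization.Away (4 : ℤ) × Localization.Away (2 : ℤ) × Localization.Away (2 : ℤ)) := by
  obtain ⟨u, hu⟩ := away_inv 4
  obtain ⟨w, hw⟩ := away_inv 2
  refine ⟨(LinearEquiv.ofBijective (Module.DirectLimit.lift ℤ ℕ (fun _ : ℕ => Fin 4 → ℤ)
    (fun i j _ => (Matrix.toLin' chairM) ^ (j - i)) (stageMap u w)
    (stageMap_compat u w hu hw)) ⟨?_, ?_⟩).toAddEquiv⟩
  · rw [injective_iff_map_eq_zero]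
    intro z hz
    obtain ⟨i, v, rfl⟩ := Module.DirectLimit.exists_of z
    rw [Module.DirectLimit.lift_of] at hz
    have h := stageMap_ker u w hu hw i v hz
    rw [← Module.DirectLimit.of_f (hij := Nat.le_succ i)]
    simp only [Nat.succ_eq_add_one, Nat.add_sub_cancel_left, pow_one]
    rw [h, map_zero]
  · intro z
    obtain ⟨i, v, h⟩ := stageMap_surj u w hu hw z
    exact ⟨Module.DirectLimit.of ℤ ℕ _ _ i v, by rw [Module.DirectLimit.lift_of, h]⟩
end

section
/- Let M be the integer matrix [[2, 3], [3, 2]], acting ℤ-linearly on ℤ² by v ↦ M·v. Then the direct limit of the ℕ-indexed system ℤ² →^M ℤ² →^M ⋯ (bonding map from stage i to stage j equal to M^{j−i}) is isomorphic, as an abelian group, to ℤ[1/5] ⊕ ℤ, where ℤ[1/5] denotes the localization of ℤ away from 5. -/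
/-- `pw n = (1 - (-5)^n) / 2`, given recursively. -/
def pinP : ℕ → ℤ
  | 0 => 0
  | n + 1 => 3 - 5 * pinP n

/-- The comparison map from stage `i`. -/
noncomputable def pinG (i : ℕ) : (Fin 2 → ℤ) →ₗ[ℤ] (Localization.Away (5 : ℤ) × ℤ) :=
  AddMonoidHom.toIntLinearMap
    { toFun := fun v =>
        (algebraMap ℤ (Localization.Away (5 : ℤ)) (v 1 + pinP i * (v 0 - v 1)) *
          IsLocalization.Away.invSelf (5 : ℤ) ^ i, (-1) ^ i * (v 0 - v 1))
      map_zero' := by simp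
      map_add' := by
        intro v w
        ext
        · simp only [Pi.add_apply, Prod.fst_add, ← add_mul, ← map_add]
          congr 2
          ring
        · simp only [Pi.add_apply, Prod.snd_add]
          ring }

theorem pinG_apply (i : ℕ) (v : Fin 2 → ℤ) : pinG i v =
    (algebraMap ℤ (Localization.Away (5 : ℤ)) (v 1 + pinP i * (v 0 - v 1)) *
          IsLocalization.Away.invSelf (5 : ℤ) ^ i, (-1) ^ i * (v 0 - v 1)) := rfl

theorem pin_inv : algebraMap ℤ (Localization.Away (5 : ℤ)) 5 *
    IsLocalization.Away.invSelf (5 : ℤ) = 1 :=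
  IsLocalization.Away.mul_invSelf (5 : ℤ)

theorem pinG_step (i : ℕ) (v : Fin 2 → ℤ) :
    pinG (i + 1) (Matrix.toLin' (!![2, 3; 3, 2] : Matrix (Fin 2) (Fin 2) ℤ) v) = pinG i v := by
  have h0 : Matrix.toLin' (!![2, 3; 3, 2] : Matrix (Fin 2) (Fin 2) ℤ) v 0
      = 2 * v 0 + 3 * v 1 := by
    simp [Matrix.toLin'_apply, Matrix.mulVec, dotProduct, Fin.sum_univ_two]
  have h1 : Matrix.toLin' (!![2, 3; 3, 2] : Matrix (Fin 2) (Fin 2) ℤ) v 1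
      = 3 * v 0 + 2 * v 1 := by
    simp [Matrix.toLin'_apply, Matrix.mulVec, dotProduct, Fin.sum_univ_two]
  rw [pinG_apply, pinG_apply, h0, h1]
  ext
  · have e : 3 * v 0 + 2 * v 1 + pinP (i + 1) * (2 * v 0 + 3 * v 1 - (3 * v 0 + 2 * v 1))
        = (v 1 + pinP i * (v 0 - v 1)) * 5 := by
      simp only [pinP]
      ring
    simp only [e]
    rw [map_mul, pow_succ', mul_assoc, ← mul_assoc (algebraMap _ _ 5), pin_inv, one_mul]
  · simp only
    ring

theorem pinG_compat (i k : ℕ) (v : Fin 2 → ℤ) :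
    pinG (i + k) (((Matrix.toLin' (!![2, 3; 3, 2] : Matrix (Fin 2) (Fin 2) ℤ)) ^ k) v)
      = pinG i v := by
  induction k with
  | zero => simp
  | succ k ih =>
    rw [pow_succ', Module.End.mul_apply, ← add_assoc, pinG_step, ih]

theorem pinG_injective (i : ℕ) : Function.Injective (pinG i) := by
  rw [injective_iff_map_eq_zero]
  intro v hv
  rw [pinG_apply, Prod.mk_eq_zero] at hv
  obtain ⟨ha, hb⟩ := hv
  have hd : v 0 - v 1 = 0 := by
    rcases mul_eq_zero.mp hb with h | h
    · exact absurd h (pow_ne_zero _ (by norm_num))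
    · exact h
  rw [hd, mul_zero, add_zero] at ha
  have ha' : algebraMap ℤ (Localization.Away (5 : ℤ)) (v 1) = 0 := by
    have := congrArg (· * algebraMap ℤ (Localization.Away (5 : ℤ)) 5 ^ i) ha
    simpa only [mul_assoc, ← mul_pow, mul_comm (IsLocalization.Away.invSelf (5 : ℤ)),
      pin_inv, one_pow, mul_one, zero_mul] using this
  have hinj : Function.Injective (algebraMap ℤ (Localization.Away (5 : ℤ))) :=
    IsLocalization.injective _
      (powers_le_nonZeroDivisors_of_noZeroDivisors (by norm_num : (5 : ℤ) ≠ 0))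
  have h1 : v 1 = 0 := hinj (by rw [ha', map_zero])
  ext j
  fin_cases j
  · show v 0 = 0
    omega
  · exact h1

theorem pinG_surj (z : Localization.Away (5 : ℤ) × ℤ) : ∃ i v, pinG i v = z := by
  obtain ⟨a, b⟩ := z
  obtain ⟨n, m, h⟩ := IsLocalization.Away.surj (5 : ℤ) a
  refine ⟨n, ![m - pinP n * ((-1) ^ n * b) + (-1) ^ n * b, m - pinP n * ((-1) ^ n * b)], ?_⟩
  rw [pinG_apply]
  ext
  · simp only [Matrix.cons_val_zero, Matrix.cons_val_one, add_sub_cancel_left, sub_add_cancel]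
    rw [← h, mul_assoc, ← mul_pow, pin_inv, one_pow, mul_one]
  · simp only [Matrix.cons_val_zero, Matrix.cons_val_one, add_sub_cancel_left]
    rw [← mul_assoc, ← mul_pow]
    norm_num

/-- The direct limit of the ℕ-indexed system `ℤ² →^M ℤ² →^M ⋯` for
`M = [[2,3],[3,2]]` (bonding map from stage `i` to stage `j` given by `M^(j-i)`)
is isomorphic, as an abelian group, to `ℤ[1/5] ⊕ ℤ`. -/
theorem stmt_11 :
    Nonempty
      (Module.DirectLimit (R := ℤ) (ι := ℕ) (fun _ : ℕ => Fin 2 → ℤ)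
          (fun i j _ => (Matrix.toLin' (!![2, 3; 3, 2] : Matrix (Fin 2) (Fin 2) ℤ)) ^ (j - i)) ≃+
        Localization.Away (5 : ℤ) × ℤ) := by
  have Hg : ∀ (i j : ℕ) (_ : i ≤ j) (x : Fin 2 → ℤ), pinG j
      (((Matrix.toLin' (!![2, 3; 3, 2] : Matrix (Fin 2) (Fin 2) ℤ)) ^ (j - i)) x)
        = pinG i x := by
    intro i j hij x
    obtain ⟨k, rfl⟩ := Nat.exists_eq_add_of_le hij
    rw [Nat.add_sub_cancel_left]
    exact pinG_compat i k x
  refine ⟨(LinearEquiv.ofBijective (Module.DirectLimit.lift ℤ ℕ (fun _ : ℕ => Fin 2 → ℤ)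
    (fun i j _ => (Matrix.toLin' (!![2, 3; 3, 2] : Matrix (Fin 2) (Fin 2) ℤ)) ^ (j - i))
    pinG Hg) ⟨?_, ?_⟩).toAddEquiv⟩
  · exact Module.DirectLimit.lift_injective _ _ pinG_injective
  · intro z
    obtain ⟨i, v, h⟩ := pinG_surj z
    exact ⟨Module.DirectLimit.of _ _ _ _ i v, by rw [Module.DirectLimit.lift_of, h]⟩
end

section
/- Let ∂₁ be the 4 × 8 integer matrix with rows (−1,1,0,0,−1,0,1,0), (1,−1,0,0,0,−1,0,1), (0,0,−1,1,1,0,−1,0), (0,0,1,−1,0,1,0,−1), and let ∂₂ be the 8 × 8 integer matrix with rows (1,1,0,1,1,2,1,1), (1,1,1,0,2,1,1,1), (1,1,1,0,2,1,1,1), (1,1,0,1,1,2,1,1), (1,1,1,0,1,0,1,1), (1,1,0,1,0,1,1,1), (1,1,0,1,0,1,1,1), (1,1,1,0,1,0,1,1). Then ∂₁ · ∂₂ = 0, so the transposed maps δ⁰ = ∂₁ᵀ : ℤ⁴ → ℤ⁸ and δ¹ = ∂₂ᵀ : ℤ⁸ → ℤ⁸ form a cochain complex (δ¹ ∘ δ⁰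 = 0), and its cohomology groups are: ker δ⁰ ≅ ℤ, (ker δ¹)/(image δ⁰) ≅ ℤ², and ℤ⁸/(image δ¹) ≅ ℤ⁵. -/
/-- First isomorphism theorem, packaged. -/
theorem quot_equiv_aux {R M P : Type*} [Ring R] [AddCommGroup M] [AddCommGroup P]
    [Module R M] [Module R P]
    (N : Submodule R M) (f : M →ₗ[R] P) (hs : Function.Surjective f)
    (hk : ∀ x, f x = 0 ↔ x ∈ N) : Nonempty ((M ⧸ N) ≃+ P) := by
  have h : N = LinearMap.ker f := by
    ext x
    rw [LinearMap.mem_ker, hk]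
  exact ⟨((Submodule.quotEquivOfEq _ _ h).trans
    (f.quotKerEquivOfSurjective hs)).toAddEquiv⟩

/-- Functionals cutting out the image of `δ¹`. -/
def funcTwo : (Fin 8 → ℤ) →ₗ[ℤ] (Fin 5 → ℤ) where
  toFun y := ![y 1 - y 0, y 6 - y 0, y 7 - y 0, y 3 - y 0 + y 2, y 5 - y 4 - y 0 + 2 * y 2]
  map_add' x y := by
    ext i
    fin_cases i <;> simp <;> ring
  map_smul' c y := by
    ext i
    fin_cases i <;> simp <;> ring

/-- Functionals cutting out the image of `δ⁰` inside the kernel of `δ¹`. -/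
def funcOne : (Fin 8 → ℤ) →ₗ[ℤ] (Fin 2 → ℤ) where
  toFun y := ![y 0 + y 1, y 4 + y 6]
  map_add' x y := by
    ext i
    fin_cases i <;> simp <;> ring
  map_smul' c y := by
    ext i
    fin_cases i <;> simp <;> ring

/-- The boundary matrices `∂₁` (4×8) and `∂₂` (8×8) of the eventual range of the vertex
stratum of the pinwheel approximant satisfy `∂₁ · ∂₂ = 0`; hence the transposed maps
`δ⁰ = ∂₁ᵀ : ℤ⁴ → ℤ⁸` and `δ¹ = ∂₂ᵀ : ℤ⁸ → ℤ⁸` form a cochain complex (`δ¹ ∘ δ⁰ = 0`),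
whose cohomology groups are `H⁰ = ker δ⁰ ≅ ℤ`, `H¹ = ker δ¹ / im δ⁰ ≅ ℤ²`, and
`H² = ℤ⁸ / im δ¹ ≅ ℤ⁵`. -/
theorem stmt_12 :
    let d1 : Matrix (Fin 4) (Fin 8) ℤ :=
      !![-1, 1, 0, 0, -1, 0, 1, 0;
          1, -1, 0, 0, 0, -1, 0, 1;
          0, 0, -1, 1, 1, 0, -1, 0;
          0, 0, 1, -1, 0, 1, 0, -1]
    let d2 : Matrix (Fin 8) (Fin 8) ℤ :=
      !![1, 1, 0, 1, 1, 2, 1, 1;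
         1, 1, 1, 0, 2, 1, 1, 1;
         1, 1, 1, 0, 2, 1, 1, 1;
         1, 1, 0, 1, 1, 2, 1, 1;
         1, 1, 1, 0, 1, 0, 1, 1;
         1, 1, 0, 1, 0, 1, 1, 1;
         1, 1, 0, 1, 0, 1, 1, 1;
         1, 1, 1, 0, 1, 0, 1, 1]
    let δ0 : (Fin 4 → ℤ) →ₗ[ℤ] (Fin 8 → ℤ) := Matrix.toLin' d1.transpose
    let δ1 : (Fin 8 → ℤ) →ₗ[ℤ] (Fin 8 → ℤ) := Matrix.toLin' d2.transpose
    d1 * d2 = 0 ∧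
    δ1.comp δ0 = 0 ∧
    Nonempty ((LinearMap.ker δ0) ≃+ ℤ) ∧
    Nonempty
      ((LinearMap.ker δ1 ⧸
          Submodule.comap (LinearMap.ker δ1).subtype (LinearMap.range δ0)) ≃+ (Fin 2 → ℤ)) ∧
    Nonempty (((Fin 8 → ℤ) ⧸ LinearMap.range δ1) ≃+ (Fin 5 → ℤ)) := by
  intro d1 d2 δ0 δ1
  have hd : d1 * d2 = 0 := by decide
  have h0 : ∀ x, δ0 x = ![x 1 - x 0, x 0 - x 1, x 3 - x 2, x 2 - x 3,
      x 2 - x 0, x 3 - x 1, x 0 - x 2, x 1 - x 3] := by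
    intro x
    ext i
    fin_cases i <;>
      simp [δ0, d1, Matrix.toLin'_apply, Matrix.mulVec, dotProduct, Fin.sum_univ_succ] <;> ring
  have h1 : ∀ v, δ1 v =
      ![v 0 + v 1 + v 2 + v 3 + v 4 + v 5 + v 6 + v 7,
        v 0 + v 1 + v 2 + v 3 + v 4 + v 5 + v 6 + v 7,
        v 1 + v 2 + v 4 + v 7,
        v 0 + v 3 + v 5 + v 6,
        v 0 + 2 * v 1 + 2 * v 2 + v 3 + v 4 + v 7,
        2 * v 0 + v 1 + v 2 + 2 * v 3 + v 5 + v 6,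
        v 0 + v 1 + v 2 + v 3 + v 4 + v 5 + v 6 + v 7,
        v 0 + v 1 + v 2 + v 3 + v 4 + v 5 + v 6 + v 7] := by
    intro v
    ext i
    fin_cases i <;>
      simp [δ1, d2, Matrix.toLin'_apply, Matrix.mulVec, dotProduct, Fin.sum_univ_succ,
        Fin.succ] <;> ring
  clear_value δ0 δ1
  refine ⟨hd, ?_, ?_, ?_, ?_⟩
  · apply LinearMap.ext
    intro x
    rw [LinearMap.comp_apply, h1, h0]
    ext i
    fin_cases i <;> simp <;> ring
  · refine ⟨(LinearEquiv.ofBijective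
      ((LinearMap.proj (0 : Fin 4) : (Fin 4 → ℤ) →ₗ[ℤ] ℤ).comp (LinearMap.ker δ0).subtype)
      ⟨?_, ?_⟩).toAddEquiv⟩
    · rw [← LinearMap.ker_eq_bot, LinearMap.ker_eq_bot']
      rintro ⟨x, hx⟩ h
      rw [LinearMap.mem_ker, h0] at hx
      have e0 : x 0 = 0 := h
      have e1 : x 1 - x 0 = 0 := congrFun hx 0
      have e2 : x 3 - x 2 = 0 := congrFun hx 2
      have e3 : x 2 - x 0 = 0 := congrFun hx 4
      apply Subtype.ext
      ext i
      fin_cases i <;> simp <;> omega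
    · intro n
      refine ⟨⟨fun _ => n, ?_⟩, rfl⟩
      rw [LinearMap.mem_ker, h0]
      ext i
      fin_cases i <;> simp
  · apply quot_equiv_aux _ (funcOne.comp (LinearMap.ker δ1).subtype)
    · intro p
      refine ⟨⟨![p 0, 0, 0, -p 0, p 1, 0, 0, -p 1], ?_⟩, ?_⟩
      · rw [LinearMap.mem_ker, h1]
        ext i
        fin_cases i <;> simp
      · ext i
        fin_cases i <;> simp [funcOne]
    · rintro ⟨v, hv⟩
      rw [LinearMap.mem_ker, h1] at hv
      have e0 : v 0 + v 1 + v 2 + v 3 + v 4 + v 5 + v 6 + v 7 = 0 := congrFun hv 0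
      have e1 : v 1 + v 2 + v 4 + v 7 = 0 := congrFun hv 2
      have e2 : v 0 + 2 * v 1 + 2 * v 2 + v 3 + v 4 + v 7 = 0 := congrFun hv 4
      rw [Submodule.mem_comap, LinearMap.mem_range]
      constructor
      · intro h
        have f0 : v 0 + v 1 = 0 := congrFun h 0
        have f1 : v 4 + v 6 = 0 := congrFun h 1
        refine ⟨![0, v 0, v 4, v 4 + v 2], ?_⟩
        rw [h0]
        ext i
        fin_cases i <;> simp <;> omega
      · rintro ⟨x, hx⟩
        rw [h0] at hx
        have g0 : x 1 - x 0 = v 0 := congrFun hx 0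
        have g1 : x 0 - x 1 = v 1 := congrFun hx 1
        have g4 : x 2 - x 0 = v 4 := congrFun hx 4
        have g6 : x 0 - x 2 = v 6 := congrFun hx 6
        ext i
        fin_cases i <;> simp [funcOne] <;> omega
  · apply quot_equiv_aux _ funcTwo
    · intro p
      refine ⟨![0, p 0, 0, p 3, 0, p 4, p 1, p 2], ?_⟩
      ext i
      fin_cases i <;> simp [funcTwo]
    · intro y
      rw [LinearMap.mem_range]
      constructor
      · intro h
        have f0 : y 1 - y 0 = 0 := congrFun h 0
        have f1 : y 6 - y 0 = 0 := congrFun h 1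
        have f2 : y 7 - y 0 = 0 := congrFun h 2
        have f3 : y 3 - y 0 + y 2 = 0 := congrFun h 3
        have f4 : y 5 - y 4 - y 0 + 2 * y 2 = 0 := congrFun h 4
        refine ⟨![0, y 4 - y 2, 0, 0, 2 * y 2 - y 4, y 0 - y 2, 0, 0], ?_⟩
        rw [h1]
        ext i
        fin_cases i <;> simp <;> omega
      · rintro ⟨v, rfl⟩
        rw [h1]
        ext i
        fin_cases i <;> simp [funcTwo] <;> ring
end
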